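/- arXiv:2208.13297 — 2 statements merged into one kernel-verified Lean document; each statement's English description precedes it below -/
import Mathlib

section
/- For every finite simple graph G, the semistrong chromatic index of G is at most Δ(G)^2, where Δ(G) denotes the maximum degree of G. -/
open SimpleGraph

variable {V : Type*}

/-- The set of endvertices of the edges in `M`. -/
def edgeVerts (M : Set (Sym2 V)) : Set V := {v | ∃ e ∈ M, v ∈ e}

/-- `M` is a matching of the simple graph `G`: a set of edges of `G`
that are pairwise disjoint. -/
def IsMatchingSet (G : SimpleGraph V) (M : Set (Sym2 V)) : Prop :=
  M ⊆ G.edgeSet ∧ ∀ e ∈ M, ∀ f ∈ M, e ≠ f → ∀ v : V, v ∈ e → v ∉ f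

/-- `M` is a semistrong matching of `G`: a matching such that every edge of `M`
has an endvertex of degree one in the subgraph of `G` induced by the
endvertices of the edges of `M`. -/
def IsSemistrongMatching (G : SimpleGraph V) (M : Set (Sym2 V)) : Prop :=
  IsMatchingSet G M ∧
    ∀ e ∈ M, ∃ u v : V, e = s(u, v) ∧ ∀ w ∈ edgeVerts M, G.Adj u w → w = v

/-- `G` has a semistrong edge-coloring with (at most) `k` colors: a proper
edge-coloring in which every color class is a semistrong matching. -/
def HasSemistrongEdgeColoring (G : SimpleGraph V) (k : ℕ) : Prop :=
  ∃ c : Sym2 V → ℕ, (∀ e ∈ G.edgeSet, c e < k) ∧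
    ∀ i : ℕ, IsSemistrongMatching G {e | e ∈ G.edgeSet ∧ c e = i}

/-- The semistrong chromatic index of `G`. -/
noncomputable def ssChromIdx (G : SimpleGraph V) : ℕ :=
  sInf {k | HasSemistrongEdgeColoring G k}

lemma sum_split_sym {E : Type*} [Fintype E] [DecidableEq E] (F : E → E → ℕ)
    (hs : ∀ a b, F a b = F b a) (h0 : ∀ a, F a a = 0) (e : E) :
    ∑ a, ∑ b, F a b = 2 * ∑ b, F e b
      + ∑ a ∈ Finset.univ.erase e, ∑ b ∈ Finset.univ.erase e, F a b := by
  rw [← Finset.add_sum_erase Finset.univ _ (Finset.mem_univ e)]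
  have h1 : ∑ a ∈ Finset.univ.erase e, ∑ b, F a b
      = ∑ a ∈ Finset.univ.erase e, F e a
        + ∑ a ∈ Finset.univ.erase e, ∑ b ∈ Finset.univ.erase e, F a b := by
    rw [← Finset.sum_add_distrib]
    refine Finset.sum_congr rfl fun a _ => ?_
    rw [← Finset.add_sum_erase Finset.univ _ (Finset.mem_univ e), hs a e]
  have h2 : ∑ b, F e b = ∑ a ∈ Finset.univ.erase e, F e a := by
    rw [← Finset.add_sum_erase Finset.univ _ (Finset.mem_univ e), h0, zero_add]
  rw [h1, h2]
  ring

/-- Local-minimum argument: a weighted graph of small weighted degree has a colouring where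
every vertex sees weight at most one in its own colour. -/
lemma exists_good_coloring {E : Type*} [Fintype E] [DecidableEq E] (k : ℕ) (w : E → E → ℕ)
    (hs : ∀ a b, w a b = w b a)
    (hd : ∀ a, ∑ b, (if a ≠ b then w a b else 0) < 2 * k) :
    ∃ c : E → Fin k, ∀ a, ∑ b, (if a ≠ b ∧ c a = c b then w a b else 0) ≤ 1 := by
  have hne : Nonempty (E → Fin k) := by
    refine ⟨fun e => ⟨0, ?_⟩⟩
    have := hd e
    omega
  obtain ⟨c, hc⟩ := Finite.exists_min
    (fun c : E → Fin k => ∑ a, ∑ b, (if a ≠ b ∧ c a = c b then w a b else 0))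
  refine ⟨c, fun e => ?_⟩
  by_contra hcon
  push Not at hcon
  have hα : ∃ α : Fin k, ∑ b, (if e ≠ b ∧ α = c b then w e b else 0) ≤ 1 := by
    by_contra hall
    push Not at hall
    have h1 : ∑ α : Fin k, ∑ b, (if e ≠ b ∧ α = c b then w e b else 0)
        = ∑ b, (if e ≠ b then w e b else 0) := by
      rw [Finset.sum_comm]
      refine Finset.sum_congr rfl fun b _ => ?_
      by_cases h : e = b <;> simp [h]
    have h2 : ∑ α : Fin k, 2 ≤ ∑ α : Fin k, ∑ b, (if e ≠ b ∧ α = c b then w e b else 0) :=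
      Finset.sum_le_sum fun α _ => hall α
    have h3 := hd e
    simp only [Finset.sum_const, Finset.card_univ, Fintype.card_fin, smul_eq_mul] at h2
    omega
  obtain ⟨α, hα⟩ := hα
  have hmin := hc (Function.update c e α)
  have hsym : ∀ c : E → Fin k, ∀ a b, (if a ≠ b ∧ c a = c b then w a b else 0)
      = (if b ≠ a ∧ c b = c a then w b a else 0) := by
    intro c a b
    rw [hs a b]
    congr 1
    simp only [ne_comm, eq_comm]
  rw [sum_split_sym _ (hsym c) (by simp) e,
    sum_split_sym _ (hsym (Function.update c e α)) (by simp) e] at hmin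
  have h4 : ∑ a ∈ Finset.univ.erase e, ∑ b ∈ Finset.univ.erase e,
      (if a ≠ b ∧ Function.update c e α a = Function.update c e α b then w a b else 0)
      = ∑ a ∈ Finset.univ.erase e, ∑ b ∈ Finset.univ.erase e,
      (if a ≠ b ∧ c a = c b then w a b else 0) := by
    refine Finset.sum_congr rfl fun a ha => Finset.sum_congr rfl fun b hb => ?_
    rw [Function.update_of_ne (Finset.ne_of_mem_erase ha),
      Function.update_of_ne (Finset.ne_of_mem_erase hb)]
  have h5 : ∑ b, (if e ≠ b ∧ Function.update c e α e = Function.update c e α b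
        then w e b else 0) = ∑ b, (if e ≠ b ∧ α = c b then w e b else 0) := by
    refine Finset.sum_congr rfl fun b _ => ?_
    by_cases h : e = b
    · simp [h]
    · rw [Function.update_self, Function.update_of_ne (Ne.symm h)]
  omega

/-- Number of adjacent pairs consisting of an end of `e` and an end of `f`. -/
def edgeWeight {V : Type*} [Fintype V] [DecidableEq V] (G : SimpleGraph V) [DecidableRel G.Adj]
    (e f : Sym2 V) : ℕ :=
  ∑ u : V, ∑ x : V, if u ∈ e ∧ x ∈ f ∧ G.Adj u x then 1 else 0

section
variable {V : Type*} [Fintype V] [DecidableEq V] (G : SimpleGraph V) [DecidableRel G.Adj]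

lemma edgeWeight_comm (e f : Sym2 V) : edgeWeight G e f = edgeWeight G f e := by
  unfold edgeWeight
  rw [Finset.sum_comm]
  refine Finset.sum_congr rfl fun a _ => Finset.sum_congr rfl fun b _ => ?_
  congr 1
  rw [G.adj_comm]
  apply propext
  tauto

/-- Contribution of one end. -/
def endWeight (u : V) (f : Sym2 V) : ℕ := ∑ x : V, if x ∈ f ∧ G.Adj u x then 1 else 0

lemma edgeWeight_mk {u v : V} (h : u ≠ v) (f : Sym2 V) :
    edgeWeight G s(u, v) f = endWeight G u f + endWeight G v f := by
  unfold edgeWeight endWeight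
  have : ∀ a : V, (∑ x : V, if a ∈ s(u, v) ∧ x ∈ f ∧ G.Adj a x then 1 else 0)
      = if a ∈ ({u, v} : Finset V) then (∑ x : V, if x ∈ f ∧ G.Adj a x then 1 else 0) else 0 := by
    intro a
    by_cases ha : a = u ∨ a = v <;> simp [ha]
  rw [Finset.sum_congr rfl fun a _ => this a, Finset.sum_ite_mem, Finset.univ_inter,
    Finset.sum_pair h]

lemma sum_endWeight_le (u : V) :
    ∑ f : G.edgeSet, endWeight G u f ≤ G.maxDegree ^ 2 := by
  unfold endWeight
  rw [Finset.sum_comm]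
  have h1 : ∀ x : V, (∑ f : G.edgeSet, if x ∈ (f : Sym2 V) ∧ G.Adj u x then 1 else 0)
      = if G.Adj u x then G.degree x else 0 := by
    intro x
    by_cases hx : G.Adj u x
    · simp only [hx, and_true, if_true]
      rw [← G.card_incidenceFinset_eq_degree x, G.incidenceFinset_eq_filter,
        Finset.card_filter]
      exact (Finset.sum_subtype G.edgeFinset (fun e => G.mem_edgeFinset)
        (fun e => if x ∈ e then 1 else 0)).symm
    · simp [hx]
  rw [Finset.sum_congr rfl fun x _ => h1 x, ← Finset.sum_filter]
  calc _ ≤ ∑ x ∈ Finset.univ.filter (fun x => G.Adj u x), G.maxDegree :=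
        Finset.sum_le_sum fun x _ => G.degree_le_maxDegree x
    _ = G.degree u * G.maxDegree := by
        rw [Finset.sum_const, smul_eq_mul, ← G.card_neighborFinset_eq_degree,
          G.neighborFinset_eq_filter]
    _ ≤ _ := by
        rw [sq]
        exact Nat.mul_le_mul_right _ (G.degree_le_maxDegree u)

lemma endWeight_pos {u x : V} {f : Sym2 V} (hx : x ∈ f) (h : G.Adj u x) :
    0 < endWeight G u f := by
  unfold endWeight
  refine Finset.sum_pos' (fun _ _ => Nat.zero_le _) ⟨x, Finset.mem_univ x, ?_⟩
  simp [hx, h]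

end

/-- For every finite simple graph `G`, the semistrong chromatic index of `G`
is at most `Δ(G)^2`. -/
theorem ssChromIdx_le_maxDegree_sq {V : Type*} [Fintype V] [DecidableEq V]
    (G : SimpleGraph V) [DecidableRel G.Adj] :
    ssChromIdx G ≤ G.maxDegree ^ 2 := by
  classical
  apply Nat.sInf_le
  obtain ⟨c, hc⟩ := exists_good_coloring (E := G.edgeSet) (G.maxDegree ^ 2)
    (fun e f => edgeWeight G e f) (fun a b => edgeWeight_comm G a b) (by
      rintro ⟨e, he⟩
      induction e using Sym2.ind with
      | _ u v =>
      have hadj : G.Adj u v := he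
      have h1 := sum_endWeight_le G u
      have h2 := sum_endWeight_le G v
      have h3 : ∑ b : G.edgeSet, edgeWeight G s(u, v) b ≤ 2 * G.maxDegree ^ 2 := by
        simp only [edgeWeight_mk G hadj.ne, Finset.sum_add_distrib]
        omega
      refine lt_of_lt_of_le ?_ h3
      refine Finset.sum_lt_sum (fun b _ => by split_ifs <;> simp)
        ⟨⟨s(u, v), he⟩, Finset.mem_univ _, ?_⟩
      simp only [ne_eq, not_true_eq_false, if_false]
      rw [edgeWeight_mk G hadj.ne]
      have := endWeight_pos G (u := u) (x := v) (f := s(u, v)) (by simp) hadj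
      omega)
  -- every edge has an end that is good
  have key : ∀ e : G.edgeSet, ∃ u v : V, (e : Sym2 V) = s(u, v) ∧ G.Adj u v ∧
      ∀ f : G.edgeSet, c e = c f → ∀ x ∈ (f : Sym2 V), G.Adj u x → e = f := by
    intro e
    have hce := hc e
    obtain ⟨e, he⟩ := e
    induction e using Sym2.ind with
    | _ u v =>
    have hadj : G.Adj u v := he
    by_contra hcon
    push Not at hcon
    obtain ⟨f, hf, x, hx, hux, hne⟩ := hcon u v rfl hadj
    obtain ⟨f', hf', x', hx', hux', hne'⟩ := hcon v u Sym2.eq_swap hadj.symm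
    have p := endWeight_pos G hx hux
    have p' := endWeight_pos G hx' hux'
    have hS : ∑ b : G.edgeSet, (if (⟨s(u, v), he⟩ : G.edgeSet) ≠ b ∧ c ⟨s(u, v), he⟩ = c b
          then edgeWeight G s(u, v) b else 0)
        = ∑ b : G.edgeSet, (if (⟨s(u, v), he⟩ : G.edgeSet) ≠ b ∧ c ⟨s(u, v), he⟩ = c b
          then endWeight G u b else 0)
        + ∑ b : G.edgeSet, (if (⟨s(u, v), he⟩ : G.edgeSet) ≠ b ∧ c ⟨s(u, v), he⟩ = c b
          then endWeight G v b else 0) := by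
      rw [← Finset.sum_add_distrib]
      refine Finset.sum_congr rfl fun b _ => ?_
      rw [edgeWeight_mk G hadj.ne]
      split_ifs <;> rfl
    have q : 0 < ∑ b : G.edgeSet, (if (⟨s(u, v), he⟩ : G.edgeSet) ≠ b ∧ c ⟨s(u, v), he⟩ = c b
          then endWeight G u b else 0) := by
      refine Finset.sum_pos' (fun _ _ => Nat.zero_le _) ⟨f, Finset.mem_univ f, ?_⟩
      rw [if_pos ⟨hne, hf⟩]
      exact p
    have q' : 0 < ∑ b : G.edgeSet, (if (⟨s(u, v), he⟩ : G.edgeSet) ≠ b ∧ c ⟨s(u, v), he⟩ = c b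
          then endWeight G v b else 0) := by
      refine Finset.sum_pos' (fun _ _ => Nat.zero_le _) ⟨f', Finset.mem_univ f', ?_⟩
      rw [if_pos ⟨hne', hf'⟩]
      exact p'
    simp only at hce
    omega
  have hcol : ∀ (e f : Sym2 V) (he : e ∈ G.edgeSet) (hf : f ∈ G.edgeSet) (i : ℕ),
      (if h : e ∈ G.edgeSet then (c ⟨e, h⟩ : ℕ) else 0) = i →
      (if h : f ∈ G.edgeSet then (c ⟨f, h⟩ : ℕ) else 0) = i → c ⟨e, he⟩ = c ⟨f, hf⟩ := by
    intro e f he hf i h1 h2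
    rw [dif_pos he] at h1
    rw [dif_pos hf] at h2
    exact Fin.ext (h1.trans h2.symm)
  refine ⟨fun e => if h : e ∈ G.edgeSet then (c ⟨e, h⟩ : ℕ) else 0, ?_, ?_⟩
  · intro e he
    simp only [dif_pos he]
    exact (c ⟨e, he⟩).isLt
  · intro i
    refine ⟨⟨fun e he => he.1, ?_⟩, ?_⟩
    · rintro e ⟨he, hei⟩ f ⟨hf, hfi⟩ hef z hze hzf
      have hcc := hcol e f he hf i hei hfi
      obtain ⟨u, v, huv, hadj, hgood⟩ := key ⟨e, he⟩
      apply hef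
      simp only at huv
      rw [huv, Sym2.mem_iff] at hze
      rcases hze with rfl | rfl
      · obtain ⟨y, rfl⟩ := Sym2.mem_iff_exists.mp hzf
        exact congrArg Subtype.val (hgood ⟨_, hf⟩ hcc y (Sym2.mem_mk_right _ _) hf)
      · exact congrArg Subtype.val (hgood ⟨f, hf⟩ hcc _ hzf hadj)
    · rintro e ⟨he, hei⟩
      obtain ⟨u, v, huv, hadj, hgood⟩ := key ⟨e, he⟩
      refine ⟨u, v, huv, ?_⟩
      rintro w ⟨f, ⟨hf, hfi⟩, hwf⟩ huw
      have hcc := hcol e f he hf i hei hfi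
      have hef := congrArg Subtype.val (hgood ⟨f, hf⟩ hcc w hwf huw)
      simp only at hef huv
      rw [← hef, huv, Sym2.mem_iff] at hwf
      rcases hwf with rfl | h
      · exact absurd huw (G.loopless.irrefl _)
      · exact h
end

section
/- If G is a finite simple graph with maximum degree Δ(G) in which no edge has both of its endvertices of degree Δ(G), then the semistrong chromatic index of G is at most Δ(G)^2 − 1. -/
open SimpleGraph

variable {V : Type*}

/-- The edges of `G` of color `i`. -/
def colClass {V : Type*} (G : SimpleGraph V) (c : Sym2 V → ℕ) (i : ℕ) : Set (Sym2 V) :=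
  {e | e ∈ G.edgeSet ∧ c e = i}

/-- Partial coloring: colors `< k` are proper colors, the others mean uncolored. -/
def PartialSS {V : Type*} (G : SimpleGraph V) (k : ℕ) (c : Sym2 V → ℕ) : Prop :=
  ∀ i < k, IsSemistrongMatching G (colClass G c i)

theorem semistrong_subset {V : Type*} {G : SimpleGraph V} {M N : Set (Sym2 V)}
    (hN : IsSemistrongMatching G N) (hMN : M ⊆ N) : IsSemistrongMatching G M := by
  obtain ⟨⟨h1, h2⟩, h3⟩ := hN
  refine ⟨⟨hMN.trans h1, fun e he f hf => h2 e (hMN he) f (hMN hf)⟩, fun e he => ?_⟩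
  obtain ⟨u, v, rfl, h⟩ := h3 e (hMN he)
  refine ⟨u, v, rfl, fun w ⟨f, hf, hw⟩ => h w ⟨f, hMN hf, hw⟩⟩

theorem semistrong_insert {V : Type*} {G : SimpleGraph V} {M : Set (Sym2 V)}
    (hM : IsMatchingSet G M) {u v : V} (huv : G.Adj u v)
    (hu : u ∉ edgeVerts M) (hv : v ∉ edgeVerts M)
    (hN : ∀ w ∈ edgeVerts M, ¬ G.Adj u w)
    (hl : ∀ e ∈ M, ∃ p q : V, e = s(p, q) ∧ ¬ G.Adj p v ∧
      ∀ w ∈ edgeVerts M, G.Adj p w → w = q) :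
    IsSemistrongMatching G (insert s(u, v) M) := by
  have key : ∀ w, w ∈ edgeVerts (insert s(u, v) M) → w = u ∨ w = v ∨ w ∈ edgeVerts M := by
    rintro w ⟨f, hf, hw⟩
    rcases hf with rfl | hf
    · rcases Sym2.mem_iff.1 hw with h | h <;> simp [h]
    · exact Or.inr (Or.inr ⟨f, hf, hw⟩)
  refine ⟨⟨?_, ?_⟩, ?_⟩
  · rintro e (rfl | he)
    · exact huv
    · exact hM.1 he
  · rintro e (rfl | he) f (rfl | hf) hne x hx hx'
    · exact hne rfl
    · rcases Sym2.mem_iff.1 hx with rfl | rfl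
      · exact hu ⟨f, hf, hx'⟩
      · exact hv ⟨f, hf, hx'⟩
    · rcases Sym2.mem_iff.1 hx' with rfl | rfl
      · exact hu ⟨e, he, hx⟩
      · exact hv ⟨e, he, hx⟩
    · exact hM.2 e he f hf hne x hx hx'
  · rintro e (rfl | he)
    · refine ⟨u, v, rfl, fun w hw hadj => ?_⟩
      rcases key w hw with rfl | rfl | h
      · exact absurd hadj (G.irrefl)
      · rfl
      · exact absurd hadj (hN w h)
    · obtain ⟨p, q, rfl, hpv, hp⟩ := hl e he
      refine ⟨p, q, rfl, fun w hw hadj => ?_⟩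
      rcases key w hw with rfl | rfl | h
      · exact absurd hadj.symm (hN p ⟨_, he, Sym2.mem_mk_left _ _⟩)
      · exact absurd hadj hpv
      · exact hp w h hadj

open Classical in
/-- The uncolored edges. -/
noncomputable def uncol {V : Type*} [Fintype V] (G : SimpleGraph V) (k : ℕ)
    (c : Sym2 V → ℕ) : Finset (Sym2 V) :=
  Finset.univ.filter (fun e => e ∈ G.edgeSet ∧ ¬ c e < k)

open Classical in
/-- The pairs of distinct edges of the same color joined by an edge of `G`. -/
noncomputable def touching {V : Type*} [Fintype V] (G : SimpleGraph V) (k : ℕ)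
    (c : Sym2 V → ℕ) : Finset (Sym2 V × Sym2 V) :=
  Finset.univ.filter (fun p => p.1 ∈ G.edgeSet ∧ p.2 ∈ G.edgeSet ∧ p.1 ≠ p.2 ∧
    c p.1 = c p.2 ∧ c p.1 < k ∧ ∃ a ∈ p.1, ∃ b ∈ p.2, G.Adj a b)

/-- The first coloring is a better partial coloring than the second one. -/
def Better {V : Type*} [Fintype V] (G : SimpleGraph V) (k : ℕ) (c' c : Sym2 V → ℕ) : Prop :=
  PartialSS G k c' ∧ ((uncol G k c').card < (uncol G k c).card ∨
    ((uncol G k c').card = (uncol G k c).card ∧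
      (touching G k c').card < (touching G k c).card))

open Classical in
theorem better_add {V : Type*} [Fintype V] {G : SimpleGraph V} {k : ℕ} {c : Sym2 V → ℕ}
    (hc : PartialSS G k c) {e : Sym2 V} (he : e ∈ G.edgeSet) (hek : ¬ c e < k)
    {α : ℕ} (hα : α < k) (hs : IsSemistrongMatching G (insert e (colClass G c α))) :
    Better G k (Function.update c e α) c := by
  refine ⟨fun i hi => ?_, Or.inl (Finset.card_lt_card ?_)⟩
  · by_cases h : i = α
    · subst h
      refine semistrong_subset hs ?_
      rintro f ⟨hf, hfi⟩
      by_cases hfe : f = e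
      · exact Or.inl hfe
      · rw [Function.update_of_ne hfe] at hfi
        exact Or.inr ⟨hf, hfi⟩
    · refine semistrong_subset (hc i hi) ?_
      rintro f ⟨hf, hfi⟩
      by_cases hfe : f = e
      · subst hfe
        simp at hfi
        exact absurd hfi.symm h
      · rw [Function.update_of_ne hfe] at hfi
        exact ⟨hf, hfi⟩
  · rw [Finset.ssubset_iff_of_subset]
    · exact ⟨e, by simp [uncol, he]; omega, by simp [uncol, hα]⟩
    · intro f hf
      simp only [uncol, Finset.mem_filter, Finset.mem_univ, true_and] at hf ⊢
      by_cases hfe : f = e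
      · subst hfe; exact ⟨he, hek⟩
      · rwa [Function.update_of_ne hfe] at hf

open Classical in
theorem better_swap {V : Type*} [Fintype V] {G : SimpleGraph V} {k : ℕ} {c : Sym2 V → ℕ}
    (hc : PartialSS G k c) {e f g : Sym2 V} (he : e ∈ G.edgeSet) (hek : ¬ c e < k)
    {α : ℕ} (hα : α < k) (hf : f ∈ colClass G c α) (hg : g ∈ colClass G c α) (hfg : f ≠ g)
    (hjoin : ∃ a ∈ f, ∃ b ∈ g, G.Adj a b)
    (hfree : ∀ f' ∈ colClass G c α, f' ≠ f → ∀ a ∈ e, ∀ b ∈ f', ¬ G.Adj a b)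
    (hs : IsSemistrongMatching G (insert e (colClass G c α \ {f}))) :
    Better G k (Function.update (Function.update c f k) e α) c := by
  have hfe : f ≠ e := by
    rintro rfl
    exact hek (hf.2 ▸ hα)
  set c' := Function.update (Function.update c f k) e α with hc'
  have ce : c' e = α := by simp [hc']
  have cf : c' f = k := by simp [hc', Function.update_of_ne hfe]
  have co : ∀ x, x ≠ e → x ≠ f → c' x = c x := by
    intro x h1 h2
    simp [hc', Function.update_of_ne h1, Function.update_of_ne h2]
  refine ⟨fun i hi => ?_, Or.inr ⟨?_, Finset.card_lt_card ?_⟩⟩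
  · by_cases h : i = α
    · subst h
      refine semistrong_subset hs ?_
      rintro x ⟨hx, hxi⟩
      by_cases h1 : x = e
      · exact Or.inl h1
      by_cases h2 : x = f
      · subst h2; omega
      · rw [co x h1 h2] at hxi
        exact Or.inr ⟨⟨hx, hxi⟩, h2⟩
    · refine semistrong_subset (hc i hi) ?_
      rintro x ⟨hx, hxi⟩
      by_cases h1 : x = e
      · subst h1; omega
      by_cases h2 : x = f
      · subst h2; omega
      · rw [co x h1 h2] at hxi
        exact ⟨hx, hxi⟩
  · have h1 : uncol G k c' = insert f ((uncol G k c).erase e) := by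
      ext x
      simp only [uncol, Finset.mem_filter, Finset.mem_univ, true_and, Finset.mem_insert,
        Finset.mem_erase]
      by_cases h1 : x = e
      · subst h1; simp [ce, hα, hfe.symm]
      by_cases h2 : x = f
      · subst h2; simp [cf]; exact hf.1
      · simp [co x h1 h2, h1, h2]
    have h2 : e ∈ uncol G k c := by simp [uncol, he]; omega
    have h3 : f ∉ (uncol G k c).erase e := by
      simp only [uncol, Finset.mem_erase, Finset.mem_filter, not_and]
      intro _ _ _ h
      exact h (hf.2 ▸ hα)
    rw [h1, Finset.card_insert_of_notMem h3, Finset.card_erase_add_one h2]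
  · rw [Finset.ssubset_iff_of_subset]
    · refine ⟨(f, g), ?_, ?_⟩
      · simp only [touching, Finset.mem_filter, Finset.mem_univ, true_and]
        exact ⟨hf.1, hg.1, hfg, hf.2.trans hg.2.symm, hf.2 ▸ hα, hjoin⟩
      · simp [touching, cf]
    · rintro ⟨x, y⟩ hxy
      simp only [touching, Finset.mem_filter, Finset.mem_univ, true_and] at hxy ⊢
      obtain ⟨hx, hy, hne, hcc, hlt, a, ha, b, hb, hab⟩ := hxy
      have hxf : x ≠ f := by rintro rfl; omega
      have hyf : y ≠ f := by rintro rfl; omega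
      have hxe : x ≠ e := by
        rintro rfl
        have := co y hne.symm hyf
        exact hfree y ⟨hy, by omega⟩ hyf a ha b hb hab
      have hye : y ≠ e := by
        rintro rfl
        have := co x hne hxf
        exact hfree x ⟨hx, by omega⟩ hxf b hb a ha hab.symm
      rw [co x hxe hxf, co y hye hyf] at hcc
      rw [co x hxe hxf] at hlt
      exact ⟨hx, hy, hne, hcc, hlt, a, ha, b, hb, hab⟩

/-- If `e = uv` is touched by the color `α` in exactly one way, there is a better coloring. -/
theorem better_of_one {V : Type*} [Fintype V] {G : SimpleGraph V} {k : ℕ} {c : Sym2 V → ℕ}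
    (hc : PartialSS G k c) {u v b y : V} (huv : G.Adj u v) (hek : ¬ c s(u, v) < k)
    {α : ℕ} (hα : α < k) (hu : u ∉ edgeVerts (colClass G c α))
    (hv : v ∉ edgeVerts (colClass G c α))
    (hf : s(b, y) ∈ colClass G c α)
    (hN : ∀ w ∈ edgeVerts (colClass G c α), ¬ G.Adj u w)
    (hNv : ∀ w ∈ edgeVerts (colClass G c α), G.Adj v w → w = b) :
    ∃ c', Better G k c' c := by
  have hM := hc α hα
  have hby : G.Adj b y := hf.1
  have other : ∀ g ∈ colClass G c α, b ∈ g → g = s(b, y) := by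
    intro g hg hbg
    by_contra hne
    exact hM.1.2 g hg _ hf hne b hbg (Sym2.mem_mk_left _ _)
  by_cases hy : ∀ w ∈ edgeVerts (colClass G c α), G.Adj y w → w = b
  · refine ⟨_, better_add hc (e := s(u, v)) huv hek hα
      (semistrong_insert hM.1 huv hu hv hN fun g hg => ?_)⟩
    by_cases hgf : g = s(b, y)
    · refine ⟨y, b, by rw [hgf, Sym2.eq_swap], fun h => ?_, hy⟩
      have := hNv y ⟨_, hf, Sym2.mem_mk_right _ _⟩ h.symm
      exact hby.ne this.symm
    · obtain ⟨p, q, rfl, hp⟩ := hM.2 g hg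
      refine ⟨p, q, rfl, fun h => hgf ?_, hp⟩
      have := hNv p ⟨_, hg, Sym2.mem_mk_left _ _⟩ h.symm
      exact other _ hg (this ▸ Sym2.mem_mk_left _ _)
  · push Not at hy
    obtain ⟨w, ⟨g, hg, hwg⟩, hyw, hwb⟩ := hy
    refine ⟨_, better_swap hc (e := s(u, v)) (f := s(b, y)) (g := g) huv hek hα hf hg ?_
      ⟨y, Sym2.mem_mk_right _ _, w, hwg, hyw⟩ ?_ ?_⟩
    · rintro rfl
      rcases Sym2.mem_iff.1 hwg with h | h
      · exact hwb h
      · exact hyw.ne h.symm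
    · intro f' hf' hne a ha x hx hadj
      rcases Sym2.mem_iff.1 ha with rfl | rfl
      · exact hN x ⟨f', hf', hx⟩ hadj
      · have := hNv x ⟨f', hf', hx⟩ hadj
        exact hne (other f' hf' (this ▸ hx))
    · have hsub : colClass G c α \ {s(b, y)} ⊆ colClass G c α := Set.sdiff_subset
      have hM' := semistrong_subset hM hsub
      have hmono : ∀ w, w ∈ edgeVerts (colClass G c α \ {s(b, y)}) →
          w ∈ edgeVerts (colClass G c α) := fun w ⟨f, hf, hw⟩ => ⟨f, hsub hf, hw⟩
      refine semistrong_insert hM'.1 huv (fun h => hu (hmono _ h)) (fun h => hv (hmono _ h))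
        (fun w hw => hN w (hmono _ hw)) fun g hg => ?_
      obtain ⟨p, q, rfl, hp⟩ := hM'.2 g hg
      refine ⟨p, q, rfl, fun h => hg.2 ?_, hp⟩
      have := hNv p ⟨_, hg.1, Sym2.mem_mk_left _ _⟩ h.symm
      exact other _ hg.1 (this ▸ Sym2.mem_mk_left _ _)

/-- The slots at `u` (excluding those through `v`). -/
def slots {V : Type*} [Fintype V] [DecidableEq V] (G : SimpleGraph V) [DecidableRel G.Adj]
    (u v : V) : Finset (Σ _ : V, V) :=
  ((G.neighborFinset u).erase v).sigma (fun w => (G.neighborFinset w).erase u)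

theorem card_slots {V : Type*} [Fintype V] [DecidableEq V] (G : SimpleGraph V)
    [DecidableRel G.Adj] {u v : V} (huv : G.Adj u v) :
    (slots G u v).card ≤ (G.degree u - 1) * (G.maxDegree - 1) := by
  rw [slots, Finset.card_sigma]
  have h1 : ((G.neighborFinset u).erase v).card = G.degree u - 1 := by
    rw [Finset.card_erase_of_mem (by simpa using huv), card_neighborFinset_eq_degree]
  rw [← h1, ← smul_eq_mul]
  refine Finset.sum_le_card_nsmul _ _ _ fun w hw => ?_
  have hw' : G.Adj u w := by simpa using Finset.mem_of_mem_erase hw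
  rw [Finset.card_erase_of_mem (by simpa using hw'.symm), card_neighborFinset_eq_degree]
  exact Nat.sub_le_sub_right (G.degree_le_maxDegree w) 1

theorem mem_slots {V : Type*} [Fintype V] [DecidableEq V] {G : SimpleGraph V}
    [DecidableRel G.Adj] {c : Sym2 V → ℕ} {α : ℕ} {u v w : V}
    (hu : u ∉ edgeVerts (colClass G c α)) (hv : v ∉ edgeVerts (colClass G c α))
    (hw : w ∈ edgeVerts (colClass G c α)) (huw : G.Adj u w) :
    ∃ z, s(w, z) ∈ colClass G c α ∧ (⟨w, z⟩ : Σ _ : V, V) ∈ slots G u v := by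
  obtain ⟨f, hf, hwf⟩ := hw
  obtain ⟨z, rfl⟩ := Sym2.mem_iff_exists.1 hwf
  refine ⟨z, hf, ?_⟩
  simp only [slots, Finset.mem_sigma, Finset.mem_erase, mem_neighborFinset]
  refine ⟨⟨?_, huw⟩, ?_, hf.1⟩
  · rintro rfl; exact hv ⟨_, hf, hwf⟩
  · rintro rfl; exact hu ⟨_, hf, Sym2.mem_mk_right _ _⟩

/-- The slots at `u` of color `α`. -/
def slotsCol {V : Type*} [Fintype V] [DecidableEq V] (G : SimpleGraph V) [DecidableRel G.Adj]
    (c : Sym2 V → ℕ) (u v : V) (α : ℕ) : Finset (Σ _ : V, V) :=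
  (slots G u v).filter (fun p => c s(p.1, p.2) = α)

theorem two_slots {V : Type*} [Fintype V] [DecidableEq V] {G : SimpleGraph V}
    [DecidableRel G.Adj] {k : ℕ} {c : Sym2 V → ℕ} (hc : PartialSS G k c)
    (hopt : ∀ c', ¬ Better G k c' c) {u v : V} (huv : G.Adj u v) (hek : ¬ c s(u, v) < k)
    {α : ℕ} (hα : α < k)
    (hu : u ∉ edgeVerts (colClass G c α)) (hv : v ∉ edgeVerts (colClass G c α)) :
    2 ≤ (slotsCol G c u v α).card + (slotsCol G c v u α).card := by
  have hM := hc α hα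
  have aux : ∀ {u v w : V}, u ∉ edgeVerts (colClass G c α) → v ∉ edgeVerts (colClass G c α) →
      w ∈ edgeVerts (colClass G c α) → G.Adj u w →
      ∃ z, s(w, z) ∈ colClass G c α ∧ (⟨w, z⟩ : Σ _ : V, V) ∈ slotsCol G c u v α := by
    intro u v w hu hv hw huw
    obtain ⟨z, hz, hz'⟩ := mem_slots hu hv hw huw
    exact ⟨z, hz, Finset.mem_filter.2 ⟨hz', hz.2⟩⟩
  have main : ∀ {u v : V}, G.Adj u v → ¬ c s(u, v) < k → u ∉ edgeVerts (colClass G c α) →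
      v ∉ edgeVerts (colClass G c α) → (slotsCol G c u v α).card = 0 →
      (slotsCol G c v u α).card ≤ 1 → False := by
    intro u v huv hek hu hv h0 h1
    have hN : ∀ w ∈ edgeVerts (colClass G c α), ¬ G.Adj u w := by
      intro w hw h
      obtain ⟨z, _, hz⟩ := aux hu hv hw h
      rw [Finset.card_eq_zero] at h0
      simp [h0] at hz
    by_cases hex : ∃ b ∈ edgeVerts (colClass G c α), G.Adj v b
    · obtain ⟨b, hb, hvb⟩ := hex
      obtain ⟨y, hy, hys⟩ := aux hv hu hb hvb
      obtain ⟨c', h⟩ := better_of_one hc huv hek hα hu hv hy hN (by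
        intro w hw hvw
        obtain ⟨z, _, hz⟩ := aux hv hu hw hvw
        have := Finset.card_le_one.1 h1 _ hz _ hys
        exact congrArg Sigma.fst this)
      exact hopt c' h
    · push Not at hex
      refine hopt _ (better_add hc (e := s(u, v)) huv hek hα
        (semistrong_insert hM.1 huv hu hv hN fun g hg => ?_))
      obtain ⟨p, q, rfl, hp⟩ := hM.2 g hg
      exact ⟨p, q, rfl, fun h => hex p ⟨_, hg, Sym2.mem_mk_left _ _⟩ h.symm, hp⟩
  by_contra hlt
  rcases Nat.eq_zero_or_pos (slotsCol G c u v α).card with h | h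
  · exact main huv hek hu hv h (by omega)
  · exact main huv.symm (by rwa [Sym2.eq_swap]) hv hu (by omega) (by omega)

theorem count_bound {V : Type*} [Fintype V] [DecidableEq V] {G : SimpleGraph V}
    [DecidableRel G.Adj] {k : ℕ} {c : Sym2 V → ℕ} (hc : PartialSS G k c)
    (hopt : ∀ c', ¬ Better G k c' c) {u v : V} (huv : G.Adj u v) (hek : ¬ c s(u, v) < k) :
    2 * k ≤ 2 * ((G.degree u - 1) + (G.degree v - 1)) +
      ((G.degree u - 1) * (G.maxDegree - 1) + (G.degree v - 1) * (G.maxDegree - 1)) := by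
  set I : Finset ℕ := ((G.neighborFinset u).erase v).image (fun w => c s(u, w)) ∪
    ((G.neighborFinset v).erase u).image (fun w => c s(v, w)) with hI
  have cI : I.card ≤ (G.degree u - 1) + (G.degree v - 1) := by
    refine (Finset.card_union_le _ _).trans (add_le_add ?_ ?_)
    · refine Finset.card_image_le.trans ?_
      rw [Finset.card_erase_of_mem (by simpa using huv), card_neighborFinset_eq_degree]
    · refine Finset.card_image_le.trans ?_
      rw [Finset.card_erase_of_mem (by simpa using huv.symm), card_neighborFinset_eq_degree]
  have hsum : ∀ a b : V, ∑ α ∈ Finset.range k \ I, (slotsCol G c a b α).card ≤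
      (slots G a b).card := by
    intro a b
    rw [← Finset.card_biUnion]
    · refine Finset.card_le_card fun p hp => ?_
      obtain ⟨α, _, hp⟩ := Finset.mem_biUnion.1 hp
      exact (Finset.mem_filter.1 hp).1
    · intro α _ β _ hne
      refine Finset.disjoint_left.2 fun p h1 h2 => hne ?_
      exact (Finset.mem_filter.1 h1).2.symm.trans (Finset.mem_filter.1 h2).2
  have h2 : (Finset.range k \ I).card * 2 ≤
      ∑ α ∈ Finset.range k \ I, ((slotsCol G c u v α).card + (slotsCol G c v u α).card) := by
    rw [← smul_eq_mul]
    refine Finset.card_nsmul_le_sum _ _ _ fun α hα => ?_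
    rw [Finset.mem_sdiff, Finset.mem_range] at hα
    obtain ⟨hαk, hαI⟩ := hα
    have hI' : ¬ ((∃ w, (w ≠ v ∧ G.Adj u w) ∧ c s(u, w) = α) ∨
        (∃ w, (w ≠ u ∧ G.Adj v w) ∧ c s(v, w) = α)) := by
      simpa [hI] using hαI
    push Not at hI'
    refine two_slots hc hopt huv hek hαk ?_ ?_
    · rintro ⟨f, ⟨hfE, hfc⟩, hwf⟩
      obtain ⟨z, rfl⟩ := Sym2.mem_iff_exists.1 hwf
      by_cases hz : z = v
      · subst hz; omega
      · exact hI'.1 z ⟨hz, hfE⟩ hfc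
    · rintro ⟨f, ⟨hfE, hfc⟩, hwf⟩
      obtain ⟨z, rfl⟩ := Sym2.mem_iff_exists.1 hwf
      by_cases hz : z = u
      · subst hz; rw [Sym2.eq_swap] at hfc; omega
      · exact hI'.2 z ⟨hz, hfE⟩ hfc
  rw [Finset.sum_add_distrib] at h2
  have h3 := hsum u v
  have h4 := hsum v u
  have h5 := card_slots G huv
  have h6 := card_slots G huv.symm
  have h7 : k ≤ (Finset.range k \ I).card + I.card := by
    have := Finset.le_card_sdiff I (Finset.range k)
    rw [Finset.card_range] at this
    omega
  omega

theorem exists_opt {V : Type*} [Fintype V] (G : SimpleGraph V) (k : ℕ) :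
    ∃ c, PartialSS G k c ∧ ∀ c', ¬ Better G k c' c := by
  have hne : {c | PartialSS G k c}.Nonempty := by
    refine ⟨fun _ => k, fun i hi => ⟨⟨fun e he => he.1, ?_⟩, ?_⟩⟩
    · intro e he
      exact absurd he.2 hi.ne'
    · intro e he
      exact absurd he.2 hi.ne'
  have wf : WellFounded (InvImage (Prod.Lex (· < ·) (· < ·))
      (fun c : Sym2 V → ℕ => ((uncol G k c).card, (touching G k c).card))) :=
    InvImage.wf _ (WellFounded.prod_lex Nat.lt_wfRel.wf Nat.lt_wfRel.wf)
  obtain ⟨c, hc, hmin⟩ := wf.has_min _ hne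
  refine ⟨c, hc, fun c' h => hmin c' h.1 ?_⟩
  exact Prod.lex_def.2 h.2

/-- If no edge of a finite simple graph `G` has both of its endvertices of
degree `Δ(G)`, then the semistrong chromatic index of `G` is at most `Δ(G)^2 - 1`. -/
theorem ssChromIdx_le_maxDegree_sq_sub_one {V : Type*} [Fintype V] [DecidableEq V]
    (G : SimpleGraph V) [DecidableRel G.Adj]
    (h : ∀ u v : V, G.Adj u v →
      ¬ (G.degree u = G.maxDegree ∧ G.degree v = G.maxDegree)) :
    ssChromIdx G ≤ G.maxDegree ^ 2 - 1 := by
  refine Nat.sInf_le ?_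
  obtain ⟨c, hc, hopt⟩ := exists_opt G (G.maxDegree ^ 2 - 1)
  have hall : ∀ e ∈ G.edgeSet, c e < G.maxDegree ^ 2 - 1 := by
    intro e he
    by_contra hek
    induction e using Sym2.ind with
    | _ u v =>
    have huv : G.Adj u v := he
    have hb := count_bound hc hopt huv hek
    have h0 := h u v huv
    have hu := G.degree_le_maxDegree u
    have hv := G.degree_le_maxDegree v
    have hu0 : 0 < G.degree u := (G.degree_pos_iff_exists_adj u).2 ⟨v, huv⟩
    have hv0 : 0 < G.degree v := (G.degree_pos_iff_exists_adj v).2 ⟨u, huv.symm⟩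
    rw [← add_mul] at hb
    generalize G.degree u = a at *
    generalize G.degree v = b at *
    generalize G.maxDegree = D at *
    obtain ⟨d, rfl⟩ : ∃ d, D = d + 1 := ⟨D - 1, by omega⟩
    have hs : (a - 1) + (b - 1) ≤ 2 * d - 1 := by omega
    have hd : 1 ≤ d := by omega
    have hm := Nat.mul_le_mul_right d hs
    have hk : (d + 1) ^ 2 - 1 = d * d + 2 * d := by
      have : (d + 1) ^ 2 = d * d + 2 * d + 1 := by ring
      omega
    rw [hk] at hb
    have hm2 : (2 * d - 1) * d + d = 2 * (d * d) := by
      obtain ⟨t, rfl⟩ : ∃ t, d = t + 1 := ⟨d - 1, by omega⟩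
      have : 2 * (t + 1) - 1 = 2 * t + 1 := by omega
      rw [this]; ring
    simp only [Nat.add_sub_cancel] at hb
    omega
  refine ⟨c, hall, fun i => ?_⟩
  by_cases hi : i < G.maxDegree ^ 2 - 1
  · exact hc i hi
  · have hE : ∀ e, ¬ (e ∈ G.edgeSet ∧ c e = i) := fun e he => hi (he.2 ▸ hall e he.1)
    exact ⟨⟨fun e he => he.1, fun e he => absurd he (hE e)⟩, fun e he => absurd he (hE e)⟩
end
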